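/- arXiv:1506.02517 — 3 statements merged into one kernel-verified Lean document; each statement's English description precedes it below -/
import Mathlib

section
/- Let r ≥ 3 be an integer and p a real number with 1 < p < ∞ such that (r−1)^p + 2^p ≤ r^p. Then there is no set C ⊆ ℤ² such that the translates c + B_p²(r), c ∈ C, partition ℤ² (equivalently, the polyomino T_p²(r), the union of unit squares centered at the points of B_p²(r), does not tile ℝ²). -/
/-- The properties of a planar lattice ball of integer radius `r`, as a relation between the two
coordinates, that obstruct tilings: it is symmetric under the dihedral group of the square,
monotone in the absolute values of the coordinates, closed under moving along an antidiagonal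
towards the diagonal, its extreme rows are single points, and the rows next to these have at least
five points. -/
structure IsPointedBall (r : ℤ) (P : ℤ → ℤ → Prop) : Prop where
  three_le : 3 ≤ r
  swap : ∀ {x y}, P x y → P y x
  mono : ∀ {x y x' y'}, P x y → x'.natAbs ≤ x.natAbs → y'.natAbs ≤ y.natAbs → P x' y'
  balance : ∀ {x y}, 0 ≤ y → y + 1 ≤ x → P x y → P (x - 1) (y + 1)
  tip : P r 0
  not_beside_tip : ¬ P r 1
  not_beyond_tip : ¬ P (r + 1) 0
  next_row : P 2 (r - 1)

/-- The translates of `P` by the points of `C` partition the lattice. -/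
def IsTiling (P : ℤ → ℤ → Prop) (C : Set (ℤ × ℤ)) : Prop :=
  ∀ z : ℤ × ℤ, ∃! c, c ∈ C ∧ P (z.1 - c.1) (z.2 - c.2)

/-- The point `(a, b)` of the open first quadrant is a corner of `P` next to which the row above is
shorter by at least two. -/
structure IsSteepCorner (P : ℤ → ℤ → Prop) (a b : ℤ) : Prop where
  one_le_left : 1 ≤ a
  one_le_right : 1 ≤ b
  mem : P a b
  not_right : ¬ P (a + 1) b
  not_up : ¬ P a (b + 1)
  not_diag : ¬ P (a - 1) (b + 1)

variable {r : ℤ} {P : ℤ → ℤ → Prop} {C : Set (ℤ × ℤ)}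

namespace IsTiling

theorem exists_mem (hC : IsTiling P C) (x y : ℤ) : ∃ u v, (u, v) ∈ C ∧ P (x - u) (y - v) := by
  obtain ⟨⟨u, v⟩, h, -⟩ := hC (x, y)
  exact ⟨u, v, h⟩

theorem eq_of_mem (hC : IsTiling P C) (x y : ℤ) {u v u' v' : ℤ} (h : (u, v) ∈ C)
    (hP : P (x - u) (y - v)) (h' : (u', v') ∈ C) (hP' : P (x - u') (y - v')) :
    u = u' ∧ v = v' := by
  simpa using (hC (x, y)).unique ⟨h, hP⟩ ⟨h', hP'⟩

theorem translate (hC : IsTiling P C) (u v : ℤ) :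
    IsTiling P {c | (c.1 + u, c.2 + v) ∈ C} := by
  rintro ⟨x, y⟩
  obtain ⟨⟨s, t⟩, ⟨h, hP⟩, huniq⟩ := hC (x + u, y + v)
  refine ⟨(s - u, t - v), ⟨by simpa using h, ?_⟩, ?_⟩
  · convert hP using 1 <;> dsimp only <;> ring
  · rintro ⟨s', t'⟩ ⟨h', hP'⟩
    have := huniq (s' + u, t' + v) ⟨h', by convert hP' using 1 <;> dsimp only <;> ring⟩
    simp only [Prod.mk.injEq] at this ⊢
    omega

theorem reflect (hB : IsPointedBall r P) (hC : IsTiling P C) :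
    IsTiling P {c | (-c.1, c.2) ∈ C} := by
  rintro ⟨x, y⟩
  obtain ⟨⟨s, t⟩, ⟨h, hP⟩, huniq⟩ := hC (-x, y)
  refine ⟨(-s, t), ⟨by simpa using h, hB.mono hP (by dsimp only; omega) le_rfl⟩, ?_⟩
  rintro ⟨s', t'⟩ ⟨h', hP'⟩
  have := huniq (-s', t') ⟨h', hB.mono hP' (by dsimp only; omega) le_rfl⟩
  simp only [Prod.mk.injEq] at this ⊢
  omega

end IsTiling

namespace IsPointedBall

theorem eq_of_mem_axis (hB : IsPointedBall r P) {x : ℤ} (hx : 0 ≤ x) (h : P x 0)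
    (h' : ¬ P (x + 1) 0) : x = r := by
  have hr := hB.three_le
  rcases lt_trichotomy x r with hlt | heq | hgt
  · exact absurd (hB.mono hB.tip (by omega) (by omega)) h'
  · exact heq
  · exact absurd (hB.mono h (by omega) (by omega)) hB.not_beyond_tip

/-- A point of the ball three of whose neighbours are outside is a tip. -/
theorem eq_tip (hB : IsPointedBall r P) {x y : ℤ} (h : P x y) (hright : ¬ P (x + 1) y)
    (hup : ¬ P x (y + 1)) (hdown : ¬ P x (y - 1)) : x = r ∧ y = 0 := by
  have hx : 0 ≤ x := by
    by_contra hx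
    exact hright (hB.mono h (by omega) le_rfl)
  have hy : y = 0 := by
    rcases lt_trichotomy y 0 with hlt | heq | hgt
    · exact absurd (hB.mono h le_rfl (by omega)) hup
    · exact heq
    · exact absurd (hB.mono h le_rfl (by omega)) hdown
  subst hy
  exact ⟨hB.eq_of_mem_axis hx h hright, rfl⟩

/-- In a tiling containing the ball at the origin, the cell `(1, r)` beside the upper tip is covered
by a steep corner. -/
theorem exists_steepCorner (hB : IsPointedBall r P) (hC : IsTiling P C) (h0 : (0, 0) ∈ C) :
    ∃ a b, IsSteepCorner P a b ∧ (1 + a, r + b) ∈ C := by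
  have hr := hB.three_le
  obtain ⟨u, v, hmem, hP⟩ := hC.exists_mem 1 r
  obtain ⟨a, rfl⟩ : ∃ a, u = 1 + a := ⟨u - 1, by ring⟩
  obtain ⟨b, rfl⟩ : ∃ b, v = r + b := ⟨v - r, by ring⟩
  have hab : P a b := hB.mono hP (by omega) (by omega)
  have hne : ¬ (1 + a = 0 ∧ r + b = 0) := fun ⟨h₁, h₂⟩ =>
    hB.not_beside_tip (hB.swap (hB.mono hab (by omega) (by omega)))
  have hright : ¬ P (a + 1) b := fun h => hne (hC.eq_of_mem 0 r hmem
    (hB.mono h (by omega) (by omega)) h0 (hB.mono (hB.swap hB.tip) (by omega) (by omega)))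
  have hup : ¬ P a (b + 1) := fun h => hne (hC.eq_of_mem 1 (r - 1) hmem
    (hB.mono h (by omega) (by omega)) h0 (hB.mono hB.next_row (by omega) (by omega)))
  have hdiag : ¬ P (a - 1) (b + 1) := fun h => hne (hC.eq_of_mem 2 (r - 1) hmem
    (hB.mono h (by omega) (by omega)) h0 (hB.mono hB.next_row (by omega) (by omega)))
  have ha : 0 ≤ a := by
    by_contra ha
    exact hright (hB.mono hab (by omega) le_rfl)
  have hb : 0 ≤ b := by
    by_contra hb
    exact hup (hB.mono hab le_rfl (by omega))
  have hb0 : b ≠ 0 := by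
    rintro rfl
    obtain rfl := hB.eq_of_mem_axis ha hab hright
    exact hdiag (hB.mono (hB.swap hB.next_row) (by omega) (by omega))
  have ha0 : a ≠ 0 := by
    rintro rfl
    obtain rfl := hB.eq_of_mem_axis hb (hB.swap hab) (fun h => hup (hB.swap h))
    obtain ⟨s, t, hst, hPst⟩ := hC.exists_mem (-1) b
    have hne₀ : ¬ (s = 0 ∧ t = 0) := fun ⟨h₁, h₂⟩ =>
      hB.not_beside_tip (hB.swap (hB.mono hPst (by omega) (by omega)))
    have hne₁ : ¬ (s = 1 + 0 ∧ t = b + b) := fun ⟨h₁, h₂⟩ =>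
      hB.not_beside_tip (hB.swap (hB.mono hPst (by omega) (by omega)))
    obtain ⟨hs, ht⟩ := hB.eq_tip hPst
      (fun h => hne₀ (hC.eq_of_mem 0 b hst (hB.mono h (by omega) (by omega)) h0
        (hB.mono (hB.swap hB.tip) (by omega) (by omega))))
      (fun h => hne₁ (hC.eq_of_mem (-1) (b + 1) hst (hB.mono h (by omega) (by omega)) hmem
        (hB.mono hB.next_row (by omega) (by omega))))
      (fun h => hne₀ (hC.eq_of_mem (-1) (b - 1) hst (hB.mono h (by omega) (by omega)) h0
        (hB.mono hB.next_row (by omega) (by omega))))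
    exact hne₀ (hC.eq_of_mem (-2) (b - 1) hst
      (hB.mono (hB.swap hB.next_row) (by omega) (by omega)) h0
      (hB.mono hB.next_row (by omega) (by omega)))
  exact ⟨a, b, ⟨by omega, by omega, hab, hright, hup, hdiag⟩, hmem⟩

theorem le_of_steepCorner (hB : IsPointedBall r P) {a b : ℤ} (h : IsSteepCorner P a b) :
    a ≤ b := by
  have hb := h.one_le_right
  by_contra hlt
  exact h.not_diag (hB.balance (by omega) (by omega) h.mem)

/-- A steep corner cannot continue downwards by a single step to the right if the ball has a steep
corner with a vertical edge below it. -/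
theorem false_of_steepCorners (hB : IsPointedBall r P) {a b a' b' : ℤ}
    (h : IsSteepCorner P a b) (h' : IsSteepCorner P a' b') (hstep : P (a + 1) (b - 1))
    (hwall : ¬ P (a + 2) (b - 2)) (hwall' : ¬ P (a' + 1) (b' - 1)) : False := by
  have ha := h.one_le_left
  have ha' := h'.one_le_left
  have hab := hB.le_of_steepCorner h
  have hab' := hB.le_of_steepCorner h'
  have hb' : b' = a' := by
    by_contra hne
    have := hB.balance (by omega) (by omega) (hB.swap h'.mem)
    exact hwall' (hB.swap this)
  subst hb'
  have hb : b ≤ a + 2 := by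
    by_contra hlt
    have := hB.balance (by omega) (by omega) (hB.swap hstep)
    exact hwall (hB.swap (hB.mono this (by omega) (by omega)))
  rcases lt_trichotomy (b' + 1) b with hlt | heq | hgt
  · exact h'.not_right (hB.mono hstep (by omega) (by omega))
  · exact hwall' (hB.mono (hB.swap h.mem) (by omega) (by omega))
  · rcases eq_or_ne a b' with heq | hne
    · exact hwall' (hB.mono hstep (by omega) (by omega))
    · exact h.not_right (hB.mono h'.mem (by omega) (by omega))

/-- In a tiling, the corner to the right of the upper tip does not extend over the tip. -/
theorem not_mem_above_tip (hB : IsPointedBall r P) (hC : IsTiling P C) {a b a' b' : ℤ}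
    (h : IsSteepCorner P a b) (hmem : (1 + a, r + b) ∈ C)
    (h' : IsSteepCorner P a' b') (hmem' : (-(1 + a'), r + b') ∈ C) : ¬ P (a + 1) (b - 1) := by
  intro hstep
  have ha := h.one_le_left
  have hb := h.one_le_right
  have ha' := h'.one_le_left
  have hb' := h'.one_le_right
  have hne : ¬ (1 + a = -(1 + a') ∧ r + b = r + b') := by omega
  refine hB.false_of_steepCorners h h' hstep (fun hP => ?_) (fun hP => ?_)
  · exact hne (hC.eq_of_mem (-1) (r + 2) hmem (hB.mono hP (by omega) (by omega)) hmem'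
      (hB.mono h'.mem (by omega) (by omega)))
  · exact hne (hC.eq_of_mem 0 (r + 1) hmem (hB.mono hstep (by omega) (by omega)) hmem'
      (hB.mono hP (by omega) (by omega)))

theorem not_isTiling (hB : IsPointedBall r P) (C : Set (ℤ × ℤ)) : ¬ IsTiling P C := by
  intro hC
  have hr := hB.three_le
  obtain ⟨u, v, huv, -⟩ := hC.exists_mem 0 0
  replace hC := hC.translate u v
  have h0 : ((0, 0) : ℤ × ℤ) ∈ {c : ℤ × ℤ | (c.1 + u, c.2 + v) ∈ C} := by simpa using huv
  generalize {c : ℤ × ℤ | (c.1 + u, c.2 + v) ∈ C} = D at hC h0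
  have hD := hC.reflect hB
  obtain ⟨a, b, h, hmem⟩ := hB.exists_steepCorner hC h0
  obtain ⟨a', b', h', hmem'⟩ := hB.exists_steepCorner hD (by simpa using h0)
  have habove := hB.not_mem_above_tip hC h hmem h' hmem'
  have habove' := hB.not_mem_above_tip hD h' hmem' h (by simpa using hmem)
  have ha := h.one_le_left
  have hb := h.one_le_right
  have ha' := h'.one_le_left
  have hb' := h'.one_le_right
  replace hmem' : (-(1 + a'), r + b') ∈ D := hmem'
  obtain ⟨s, t, hst, hP⟩ := hC.exists_mem 0 (r + 1)
  have hne : ¬ (s = 1 + a ∧ t = r + b) := by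
    rintro ⟨rfl, rfl⟩
    exact habove (hB.mono hP (by omega) (by omega))
  have hne' : ¬ (s = -(1 + a') ∧ t = r + b') := by
    rintro ⟨rfl, rfl⟩
    exact habove' (hB.mono hP (by omega) (by omega))
  have hne₀ : ¬ (s = 0 ∧ t = 0) := by
    rintro ⟨rfl, rfl⟩
    exact hB.not_beyond_tip (hB.swap (hB.mono hP (by omega) (by omega)))
  obtain ⟨ht, hs⟩ := hB.eq_tip (x := t - (r + 1)) (y := s)
    (hB.swap (hB.mono hP (by omega) (by omega)))
    (fun hQ => hne₀ (hC.eq_of_mem 0 r hst (hB.mono (hB.swap hQ) (by omega) (by omega)) h0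
      (hB.mono (hB.swap hB.tip) (by omega) (by omega))))
    (fun hQ => hne' (hC.eq_of_mem (-1) (r + 1) hst (hB.mono (hB.swap hQ) (by omega) (by omega))
      hmem' (hB.mono h'.mem (by omega) (by omega))))
    (fun hQ => hne (hC.eq_of_mem 1 (r + 1) hst (hB.mono (hB.swap hQ) (by omega) (by omega))
      hmem (hB.mono h.mem (by omega) (by omega))))
  exact hne (hC.eq_of_mem 1 (r + 2) hst (hB.mono hB.next_row (by omega) (by omega))
    hmem (hB.mono h.mem (by omega) (by omega)))

end IsPointedBall

/-- Moving two nonnegative reals towards each other by one decreases the sum of their powers. -/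
theorem sub_one_rpow_add_add_one_rpow_le {p x y : ℝ} (hp : 1 ≤ p) (hy : 0 ≤ y)
    (hxy : y + 1 ≤ x) : (x - 1) ^ p + (y + 1) ^ p ≤ x ^ p + y ^ p := by
  have hconv := convexOn_rpow hp
  have hd : 0 < x - y := by linarith
  have hsum : 1 / (x - y) + (x - y - 1) / (x - y) = 1 := by field_simp; ring
  have hpos : 0 ≤ 1 / (x - y) := by positivity
  have hpos' : 0 ≤ (x - y - 1) / (x - y) := div_nonneg (by linarith) hd.le
  have hx : x ∈ Set.Ici (0 : ℝ) := Set.mem_Ici.2 (by linarith)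
  have h₁ := hconv.2 hx (Set.mem_Ici.2 hy) hpos hpos' hsum
  have h₂ := hconv.2 hx (Set.mem_Ici.2 hy) hpos' hpos ((add_comm _ _).trans hsum)
  simp only [smul_eq_mul] at h₁ h₂
  have e₁ : 1 / (x - y) * x + (x - y - 1) / (x - y) * y = y + 1 := by field_simp; ring
  have e₂ : (x - y - 1) / (x - y) * x + 1 / (x - y) * y = x - 1 := by field_simp; ring
  rw [e₁] at h₁
  rw [e₂] at h₂
  linear_combination h₁ + h₂ + (x ^ p + y ^ p) * hsum

theorem isPointedBall_rpow {r : ℕ} (hr : 3 ≤ r) {p : ℝ} (hp : 1 < p)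
    (h : ((r : ℝ) - 1) ^ p + 2 ^ p ≤ (r : ℝ) ^ p) :
    IsPointedBall r fun x y : ℤ => |(x : ℝ)| ^ p + |(y : ℝ)| ^ p ≤ (r : ℝ) ^ p where
  three_le := by exact_mod_cast hr
  swap hxy := by rwa [add_comm]
  mono {x y x' y'} hxy hx hy := by
    have hx' : |(x' : ℝ)| ≤ |(x : ℝ)| := by exact_mod_cast sq_le_sq.1 (Int.natAbs_le_iff_sq_le.1 hx)
    have hy' : |(y' : ℝ)| ≤ |(y : ℝ)| := by exact_mod_cast sq_le_sq.1 (Int.natAbs_le_iff_sq_le.1 hy)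
    refine le_trans ?_ hxy
    gcongr
  balance {x y} hy hxy hP := by
    have hy' : (0 : ℝ) ≤ y := by exact_mod_cast hy
    have hxy' : (y : ℝ) + 1 ≤ x := by exact_mod_cast hxy
    have := sub_one_rpow_add_add_one_rpow_le hp.le hy' hxy'
    rw [abs_of_nonneg (by linarith), abs_of_nonneg hy'] at hP
    push_cast
    rw [abs_of_nonneg (by linarith), abs_of_nonneg (by linarith)]
    linarith
  tip := by simp [Real.zero_rpow (by linarith : p ≠ 0)]
  not_beside_tip := by simp
  not_beyond_tip := by
    have : (r : ℝ) ^ p < ((r : ℝ) + 1) ^ p :=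
      Real.rpow_lt_rpow (by positivity) (by linarith) (by linarith)
    simp only [not_le]
    push_cast
    rw [abs_of_nonneg (by positivity), abs_zero, Real.zero_rpow (by linarith)]
    linarith
  next_row := by
    have : (3 : ℝ) ≤ r := by exact_mod_cast hr
    push_cast
    rw [abs_two, abs_of_nonneg (by linarith)]
    linarith

/-- For an integer `r ≥ 3` and a real `1 < p < ∞` with `(r−1)^p + 2^p ≤ r^p`, there is no
tiling of `ℤ²` (equivalently of `ℝ²` by the polyomino `T_p²(r)`) by translates of the
`ℓ_p` ball `B_p²(r)`. -/
theorem no_tiling_Z2 (r : ℕ) (hr : 3 ≤ r) (p : ℝ) (hp : 1 < p)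
    (h : ((r : ℝ) - 1) ^ p + 2 ^ p ≤ (r : ℝ) ^ p) :
    ¬ ∃ C : Set (ℤ × ℤ), ∀ z : ℤ × ℤ, ∃! c, c ∈ C ∧
        (|z.1 - c.1| : ℝ) ^ p + (|z.2 - c.2| : ℝ) ^ p ≤ (r : ℝ) ^ p := by
  rintro ⟨C, hC⟩
  refine (isPointedBall_rpow hr hp h).not_isTiling C fun z => ?_
  simpa using hC z
end

section
/- Let n ≥ 3 and r ≥ 3 be integers and p a real number with 1 < p < ∞ such that (n−1)·(r−1)^p + (r−2)^p ≤ r^p. Then there is no set C ⊆ ℤ^n such that the translates c + B_p^n(r), c ∈ C, partition ℤ^n (equivalently, the polyomino T_p^n(r), the union of unit cubes centered at the points of B_p^n(r), does not tile ℝ^n). -/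
open Finset

/-- `C` contains the origin and the translates `c + B`, `c ∈ C`, partition `ℤ^n`, where `B` lies
between the cube `[-(r-1), r-1]^n` without its corners and that cube itself, except for the
additional points `± r e_i`. -/
structure IsBumpyCubeTiling {n : ℕ} (r : ℤ) (B C : Set (Fin n → ℤ)) : Prop where
  three_le_dim : 3 ≤ n
  three_le_radius : 3 ≤ r
  mem_of_not_corner : ∀ x : Fin n → ℤ, ∀ j, (∀ i, |x i| ≤ r - 1) → |x j| ≤ r - 2 → x ∈ B
  bump_mem : ∀ x : Fin n → ℤ, ∀ i, |x i| = r → (∀ j, j ≠ i → x j = 0) → x ∈ B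
  cube_or_bump : ∀ x ∈ B, (∀ i, |x i| ≤ r - 1) ∨ ∃ i, |x i| = r ∧ ∀ j, j ≠ i → x j = 0
  corner_mem : ∀ x ∈ B, (∀ i, |x i| = r - 1) → ∀ y : Fin n → ℤ, (∀ i, |y i| = r - 1) → y ∈ B
  zero_mem : (0 : Fin n → ℤ) ∈ C
  cover : ∀ z : Fin n → ℤ, ∃ c ∈ C, z - c ∈ B
  unique : ∀ z : Fin n → ℤ, ∀ c ∈ C, ∀ c' ∈ C, z - c ∈ B → z - c' ∈ B → c = c'

lemma Int.exists_balanced_halving {r d : ℤ} (hd : |d| ≤ 2 * r - 2) :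
    ∃ x, |x| ≤ r - 1 ∧ |d - x| ≤ r - 1 ∧ (|d| ≤ 2 * r - 3 → |x| ≤ r - 2) ∧
      (|d| ≤ 2 * r - 4 → |d - x| ≤ r - 2) := by
  rcases le_total 0 d with h | h
  · exact ⟨d / 2, by grind⟩
  · exact ⟨-((-d) / 2), by grind⟩

lemma Fin.exists_ne_ne {n : ℕ} (hn : 3 ≤ n) (i j : Fin n) : ∃ k, k ≠ i ∧ k ≠ j := by
  have : ∃ k, k ∉ ({i, j} : Finset (Fin n)) := by
    by_contra! hk
    have h1 := Finset.card_le_card (fun x _ => hk x : (univ : Finset (Fin n)) ⊆ {i, j})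
    have h2 := Finset.card_le_two (a := i) (b := j)
    simp at h1
    omega
  simpa using this

namespace IsBumpyCubeTiling

variable {n : ℕ} {r : ℤ} {B C : Set (Fin n → ℤ)}

lemma eq_of_small_coord (T : IsBumpyCubeTiling r B C) {c c' : Fin n → ℤ} (hc : c ∈ C)
    (hc' : c' ∈ C) (j : Fin n) (hall : ∀ i, |c i - c' i| ≤ 2 * r - 2)
    (hj : |c j - c' j| ≤ 2 * r - 4) : c = c' := by
  choose x h1 h2 h3 h4 using fun i => Int.exists_balanced_halving (hall i)
  refine T.unique (fun i => c i - x i) c hc c' hc' ?_ ?_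
  · refine T.mem_of_not_corner _ j (fun i => ?_) ?_
    · simpa using h1 i
    · simpa using h3 j (by omega)
  · refine T.mem_of_not_corner _ j (fun i => ?_) ?_
    · have := h2 i
      simp only [Pi.sub_apply]
      grind
    · have := h4 j hj
      simp only [Pi.sub_apply]
      grind

lemma eq_of_two_small_coords (T : IsBumpyCubeTiling r B C) {c c' : Fin n → ℤ} (hc : c ∈ C)
    (hc' : c' ∈ C) (j k : Fin n) (hjk : j ≠ k) (hall : ∀ i, |c i - c' i| ≤ 2 * r - 2)
    (hj : |c j - c' j| ≤ 2 * r - 3) (hk : |c k - c' k| ≤ 2 * r - 3) : c = c' := by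
  choose x h1 h2 h3 h4 using fun i => Int.exists_balanced_halving (hall i)
  refine T.unique (fun i => c i - if i = k then c k - c' k - x k else x i) c hc c' hc' ?_ ?_
  · refine T.mem_of_not_corner _ j (fun i => ?_) ?_
    · have := h1 i
      have := h2 i
      simp only [Pi.sub_apply]
      grind
    · simpa [hjk] using h3 j hj
  · refine T.mem_of_not_corner _ k (fun i => ?_) ?_
    · have := h1 i
      have := h2 i
      simp only [Pi.sub_apply]
      grind
    · have := h3 k hk
      simp only [Pi.sub_apply]
      grind

lemma cover_around_bump (T : IsBumpyCubeTiling r B C) {i₀ j : Fin n} {y d : Fin n → ℤ}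
    (hy₀ : y i₀ = r) (hy : ∀ k, k ≠ i₀ → |y k| ≤ 1) (hj : j ≠ i₀) (hyj : y j ≠ 0)
    (hd : d ∈ C) (hyd : y - d ∈ B) :
    (d i₀ = 2 * r - 1 ∧ ∀ k, k ≠ i₀ → |y k - d k| ≤ r - 1) ∨
      (d i₀ = 2 * r ∧ ∀ k, k ≠ i₀ → d k = y k) := by
  have hr := T.three_le_radius
  have hd0 : d ≠ 0 := by
    rintro rfl
    rw [sub_zero] at hyd
    rcases T.cube_or_bump y hyd with h | ⟨i, hi, h⟩
    · have := h i₀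
      grind
    · by_cases hi₀ : i₀ = i
      · exact hyj (h j (by grind))
      · have := h i₀ hi₀
        omega
  rcases T.cube_or_bump _ hyd with h | ⟨i, hi, h⟩
  · simp only [Pi.sub_apply] at h
    refine Or.inl ⟨?_, fun k _ => h k⟩
    by_contra hne
    obtain ⟨k, hk₀, hkj⟩ := Fin.exists_ne_ne T.three_le_dim i₀ j
    refine hd0 (T.eq_of_two_small_coords hd T.zero_mem j k hkj.symm (fun i => ?_) ?_ ?_)
    · have := h i
      have := hy i
      simp only [Pi.zero_apply]
      grind
    · have := h j
      have := hy j hj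
      simp only [Pi.zero_apply]
      grind
    · have := h k
      have := hy k hk₀
      simp only [Pi.zero_apply]
      grind
  · simp only [Pi.sub_apply] at h hi
    by_cases hii : i = i₀
    · subst hii
      refine Or.inr ⟨?_, fun k hk => by have := h k hk; omega⟩
      by_contra hne
      have hdi : d i = 0 := by grind
      refine hd0 (T.eq_of_small_coord hd T.zero_mem i (fun k => ?_) ?_)
      · have := h k
        have := hy k
        simp only [Pi.zero_apply]
        grind
      · simp only [Pi.zero_apply]
        grind
    · exfalso
      obtain ⟨k, hk₀, hki⟩ := Fin.exists_ne_ne T.three_le_dim i₀ i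
      refine hd0 (T.eq_of_small_coord hd T.zero_mem k (fun l => ?_) ?_)
      · have := h l
        have := hy l
        simp only [Pi.zero_apply]
        grind
      · have := h k hki
        have := hy k hk₀
        simp only [Pi.zero_apply]
        grind

/-- If the corners of the cube are missing, the tip of a bump cannot fill a missing corner:
otherwise the other translates around the bump pair up the points `r e_{i₀} + ∑ ± e_j`, all but
one of which they cover. -/
lemma bump_not_in_corner (T : IsBumpyCubeTiling r B C)
    (hB : ∀ x ∈ B, ¬ ∀ i, |x i| = r - 1) {i₀ : Fin n} {c : Fin n → ℤ} (hc : c ∈ C)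
    (hc₀ : c i₀ = 2 * r - 1) (hcj : ∀ j, j ≠ i₀ → |c j| = r - 1) : False := by
  have hr := T.three_le_radius
  have cover' : ∀ y : Fin n → ℤ, y i₀ = r → (∀ k, k ≠ i₀ → |y k| ≤ 1) →
      (∃ j, j ≠ i₀ ∧ y j ≠ 0) → ∃ d ∈ C, d i₀ = 2 * r - 1 ∧
        (∀ k, k ≠ i₀ → |y k - d k| ≤ r - 1) ∧ y - d ∈ B := by
    rintro y hy₀ hy ⟨j, hj, hyj⟩
    obtain ⟨d, hd, hyd⟩ := T.cover y
    rcases T.cover_around_bump hy₀ hy hj hyj hd hyd with h | ⟨h₀, h⟩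
    · exact ⟨d, hd, h.1, h.2, hyd⟩
    · have : d = c := by
        refine T.eq_of_small_coord hd hc i₀ (fun k => ?_) (by grind)
        have := h k
        have := hy k
        have := hcj k
        grind
      subst this
      omega
  have unique' : ∀ y d d' : Fin n → ℤ, d ∈ C → d' ∈ C → d i₀ = 2 * r - 1 → d' i₀ = 2 * r - 1 →
      (∀ k, k ≠ i₀ → |y k - d k| ≤ r - 1) → (∀ k, k ≠ i₀ → |y k - d' k| ≤ r - 1) → d = d' := by
    intro y d d' hd hd' h₀ h₀' h h'
    refine T.eq_of_small_coord hd hd' i₀ (fun k => ?_) (by grind)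
    have := h k
    have := h' k
    grind
  have exists_mid : ∀ d ∈ C, d i₀ = 2 * r - 1 → (∀ k, k ≠ i₀ → |d k| ≤ r) → d ≠ c →
      ∃ j, j ≠ i₀ ∧ |d j| ≤ r - 2 := by
    intro d hd h₀ hle hne
    by_contra! hbig
    have habs : ∀ k, k ≠ i₀ → |d k| = r ∨ |d k| = r - 1 := fun k hk => by
      have := hle k hk
      have := hbig k hk
      omega
    by_cases hex : ∃ j, j ≠ i₀ ∧ |d j| = r
    · obtain ⟨j, hj, hdj⟩ := hex
      let y : Fin n → ℤ := fun k =>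
        if k = i₀ then r else if d k = r then 1 else if d k = -r then -1 else 0
      have hy₀ : y i₀ = r := by simp [y]
      have hyd : ∀ k, k ≠ i₀ → |y k - d k| ≤ r - 1 := fun k hk => by
        have := habs k hk
        simp only [y]
        grind
      obtain ⟨d', hd', h₀', h', hB'⟩ := cover' y hy₀
        (fun k hk => by simp only [y]; grind) ⟨j, hj, by simp only [y]; grind⟩
      obtain rfl := unique' y d d' hd hd' h₀ h₀' hyd h'
      refine hB _ hB' (fun k => ?_)
      have := habs k
      simp only [Pi.sub_apply, y]
      grind
    · push Not at hex
      refine hne (T.eq_of_small_coord hd hc i₀ (fun k => ?_) (by grind))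
      have := habs k
      have := hcj k
      have := hex k
      grind
  obtain ⟨j₀, hj₀, -⟩ := Fin.exists_ne_ne T.three_le_dim i₀ i₀
  let pt : (Fin n → Bool) → Fin n → ℤ := fun b k => if k = i₀ then r else if b k then 1 else -1
  have hpt : ∀ b k, k ≠ i₀ → pt b k = if b k then 1 else -1 := fun b k hk => by simp [pt, hk]
  choose D hDC hD₀ hD _ using fun b => cover' (pt b) (by simp [pt])
    (fun k hk => by rw [hpt b k hk]; split <;> simp)
    ⟨j₀, hj₀, by rw [hpt b j₀ hj₀]; split <;> simp⟩
  have hmid : ∀ b, ∃ j, j ≠ i₀ ∧ (D b ≠ c → |D b j| ≤ r - 2) := fun b => by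
    by_cases hbc : D b = c
    · exact ⟨j₀, hj₀, fun h => absurd hbc h⟩
    · obtain ⟨j, hj, h⟩ := exists_mid (D b) (hDC b) (hD₀ b) (fun k hk => by
        have := hD b k hk
        rw [hpt b k hk] at this
        grind) hbc
      exact ⟨j, hj, fun _ => h⟩
  have hJ' : ∃ J : (Fin n → ℤ) → Fin n, ∀ b,
      J (D b) ≠ i₀ ∧ (D b ≠ c → |D b (J (D b))| ≤ r - 2) := by
    have : ∀ d, ∃ j, ∀ b, D b = d → j ≠ i₀ ∧ (d ≠ c → |d j| ≤ r - 2) := fun d => by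
      by_cases hd : ∃ b, D b = d
      · obtain ⟨b, rfl⟩ := hd
        obtain ⟨j, hj⟩ := hmid b
        exact ⟨j, fun _ _ => hj⟩
      · push Not at hd
        exact ⟨i₀, fun b hb => absurd hb (hd b)⟩
    choose J hJ using this
    exact ⟨J, fun b => hJ (D b) b rfl⟩
  obtain ⟨J, hJ⟩ := hJ'
  let flip : Fin n → (Fin n → Bool) → Fin n → Bool := fun j b => Function.update b j (!b j)
  have flip_flip : ∀ j b, flip j (flip j b) = b := fun j b => by simp [flip]
  have flip_ne : ∀ j b, flip j b ≠ b := fun j b h => by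
    have := congrFun h j
    simp [flip] at this
  have D_flip : ∀ b, D b ≠ c → D (flip (J (D b)) b) = D b := fun b hb => by
    refine unique' (pt (flip (J (D b)) b)) _ _ (hDC _) (hDC b) (hD₀ _) (hD₀ b) (hD _) ?_
    intro k hk
    have h1 := hD b k hk
    have h2 := (hJ b).2 hb
    rw [hpt _ k hk] at h1 ⊢
    by_cases hkJ : k = J (D b)
    · rw [← hkJ] at h2
      grind
    · simpa [flip, hkJ] using h1
  let S : Finset (Fin n → Bool) := univ.filter fun b => b i₀ = true
  let bc : Fin n → Bool := fun k => if k = i₀ then true else decide (0 < c k)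
  have hbcS : bc ∈ S := by simp [S, bc]
  have hflipS : ∀ j b, j ≠ i₀ → b ∈ S → flip j b ∈ S := fun j b hj hb => by
    simp only [S, mem_filter, mem_univ, true_and] at hb ⊢
    simpa [flip, hj.symm] using hb
  have hDbc : D bc = c := by
    refine unique' (pt bc) _ _ (hDC _) hc (hD₀ _) hc₀ (hD _) (fun k hk => ?_)
    have := hcj k hk
    rw [hpt _ k hk]
    simp only [bc]
    grind
  have hDc : ∀ b ∈ S, D b = c → b = bc := fun b hb h => by
    funext k
    simp only [S, mem_filter, mem_univ, true_and] at hb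
    by_cases hk : k = i₀
    · subst hk
      simp [bc, hb]
    · have h1 := hD b k hk
      have := hcj k hk
      rw [h, hpt b k hk] at h1
      simp only [bc]
      grind
  have sum_S : ∑ _b ∈ S, (1 : ZMod 2) = 0 :=
    Finset.sum_involution (fun b _ => flip j₀ b) (fun _ _ => by decide)
      (fun b _ _ => flip_ne j₀ b) (fun b hb => hflipS j₀ b hj₀ hb) (fun b _ => flip_flip j₀ b)
  have hDne : ∀ b ∈ S.erase bc, D b ≠ c := fun b hb h =>
    (mem_erase.1 hb).1 (hDc b (mem_erase.1 hb).2 h)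
  have sum_erase_S : ∑ _b ∈ S.erase bc, (1 : ZMod 2) = 0 :=
    Finset.sum_involution (fun b _ => flip (J (D b)) b) (fun _ _ => by decide)
      (fun b _ _ => flip_ne _ b)
      (fun b hb => mem_erase.2 ⟨fun h => hDne b hb (by rw [← D_flip b (hDne b hb), h, hDbc]),
        hflipS _ b (hJ b).1 (mem_erase.1 hb).2⟩)
      (fun b hb => by
        simp only [D_flip b (hDne b hb)]
        exact flip_flip _ b)
  rw [← Finset.add_sum_erase S _ hbcS, sum_erase_S] at sum_S
  exact absurd sum_S (by decide)

lemma exists_side_translate (T : IsBumpyCubeTiling r B C) {i₀ j : Fin n} (hj : j ≠ i₀) {s : ℤ}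
    (hs : |s| = 1) :
    ∃ d ∈ C, d i₀ = 2 * r - 1 ∧ d j = s * r ∧ ∀ k, k ≠ i₀ → k ≠ j → |d k| ≤ r - 1 := by
  have hr := T.three_le_radius
  have cover' : ∀ (k : Fin n) (t : ℤ), k ≠ i₀ → |t| = 1 → ∃ d ∈ C,
      (d i₀ = 2 * r - 1 ∧ |t - d k| ≤ r - 1 ∧ ∀ l, l ≠ i₀ → l ≠ k → |d l| ≤ r - 1) ∨
      (d i₀ = 2 * r ∧ d k = t ∧ ∀ l, l ≠ i₀ → l ≠ k → d l = 0) := by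
    intro k t hk ht
    let y : Fin n → ℤ := fun l => if l = i₀ then r else if l = k then t else 0
    obtain ⟨d, hd, hyd⟩ := T.cover y
    refine ⟨d, hd, ?_⟩
    rcases T.cover_around_bump (i₀ := i₀) (j := k) (y := y) (by simp [y])
      (fun l hl => by simp only [y]; grind) hk (by simp only [y]; grind) hd hyd with h | h
    · refine Or.inl ⟨h.1, by simpa [y, hk] using h.2 k hk, fun l hl hlk => ?_⟩
      simpa [y, hl, hlk] using h.2 l hl
    · refine Or.inr ⟨h.1, by simpa [y, hk] using h.2 k hk, fun l hl hlk => ?_⟩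
      simpa [y, hl, hlk] using h.2 l hl
  obtain ⟨d, hd, ⟨h₀, h1, h2⟩ | ⟨h₀, h1, h2⟩⟩ := cover' j s hj hs
  · refine ⟨d, hd, h₀, ?_, h2⟩
    by_contra hne
    have hdj : |d j| ≤ r - 1 := by
      rcases (abs_eq zero_le_one).1 hs with rfl | rfl <;> grind
    let z : Fin n → ℤ := fun l => if l = i₀ then r else 0
    have hz : z - d ∉ B := fun hzd => by
      have : d = 0 := T.unique z d hd 0 T.zero_mem hzd
        (T.bump_mem _ i₀ (by simp [z]; omega) (fun l hl => by simp [z, hl]))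
      rw [this] at h₀
      simp only [Pi.zero_apply] at h₀
      omega
    have hle : ∀ l, |(z - d) l| ≤ r - 1 := fun l => by
      have := h2 l
      simp only [Pi.sub_apply, z]
      grind
    have heq : ∀ l, |(z - d) l| = r - 1 := fun l => by
      by_contra hl
      exact hz (T.mem_of_not_corner _ l hle (by have := hle l; omega))
    refine T.bump_not_in_corner (fun x hx hxc => hz (T.corner_mem x hx hxc _ heq)) hd h₀
      (fun l hl => ?_)
    simpa [z, hl] using heq l
  · exfalso
    obtain ⟨k, hk₀, hkj⟩ := Fin.exists_ne_ne T.three_le_dim i₀ j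
    obtain ⟨e, he, ⟨g₀, g1, g2⟩ | ⟨g₀, g1, g2⟩⟩ := cover' k 1 hk₀ (by simp)
    · have : d = e := by
        refine T.eq_of_small_coord hd he i₀ (fun l => ?_) (by grind)
        have := h2 l
        have := g2 l
        grind
      subst this
      omega
    · have : d = e := by
        refine T.eq_of_small_coord hd he i₀ (fun l => ?_) (by grind)
        have := h2 l
        have := g2 l
        grind
      subst this
      have := h2 k hk₀ hkj
      omega

lemma not_isBumpyCubeTiling : ¬ IsBumpyCubeTiling r B C := by
  intro T
  have hr := T.three_le_radius
  let i₀ : Fin n := ⟨0, by have := T.three_le_dim; omega⟩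
  obtain ⟨j, hj, -⟩ := Fin.exists_ne_ne T.three_le_dim i₀ i₀
  let z : Fin n → ℤ := fun l => if l = i₀ then r + 1 else 0
  have hz₀ : z i₀ = r + 1 := by simp [z]
  have hz : ∀ l, l ≠ i₀ → z l = 0 := fun l hl => by simp [z, hl]
  obtain ⟨d, hd, hzd⟩ := T.cover z
  have hd0 : d ≠ 0 := by
    rintro rfl
    rw [sub_zero] at hzd
    rcases T.cube_or_bump z hzd with h | ⟨i, hi, h⟩
    · have := h i₀
      grind
    · by_cases hii : i = i₀ <;> grind
  rcases T.cube_or_bump _ hzd with h | ⟨i, hi, h⟩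
  · simp only [Pi.sub_apply] at h
    have hdl : ∀ l, l ≠ i₀ → |d l| ≤ r - 1 := fun l hl => by
      have := h l
      rw [hz l hl] at this
      grind
    have hdi := h i₀
    have hdj := hdl j hj
    have hd₀ : 2 * r - 1 ≤ d i₀ := by
      by_contra hlt
      refine hd0 (T.eq_of_small_coord hd T.zero_mem j (fun l => ?_) ?_)
      · have := hdl l
        simp only [Pi.zero_apply]
        grind
      · simp only [Pi.zero_apply]
        grind
    obtain ⟨s, hs, hsd⟩ : ∃ s : ℤ, |s| = 1 ∧ |d j - s * r| ≤ r := by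
      rcases le_total 0 (d j) with h0 | h0
      · exact ⟨1, by simp, by grind⟩
      · exact ⟨-1, by simp, by grind⟩
    obtain ⟨e, he, g₀, g1, g2⟩ := T.exists_side_translate hj hs
    have : d = e := by
      refine T.eq_of_small_coord hd he i₀ (fun l => ?_) (by grind)
      have := hdl l
      have := g2 l
      rw [← g1] at hsd
      grind
    subst this
    rcases (abs_eq zero_le_one).1 hs with rfl | rfl <;> grind
  · simp only [Pi.sub_apply] at h hi
    by_cases hii : i = i₀
    · rw [hii] at h hi
      have hdl : ∀ l, l ≠ i₀ → d l = 0 := fun l hl => by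
        have := h l hl
        have := hz l hl
        omega
      obtain hdi | hdi : d i₀ = 1 ∨ d i₀ = 2 * r + 1 := by grind
      · refine hd0 (T.eq_of_small_coord hd T.zero_mem i₀ (fun l => ?_) ?_)
        · have := hdl l
          simp only [Pi.zero_apply]
          grind
        · simp only [Pi.zero_apply]
          grind
      · obtain ⟨e, he, g₀, g1, g2⟩ := T.exists_side_translate hj (s := 1) (by simp)
        have : d = e := by
          refine T.eq_of_small_coord hd he i₀ (fun l => ?_) (by grind)
          have := hdl l
          have := g2 l
          grind
        subst this
        omega
    · obtain ⟨k, hk₀, hki⟩ := Fin.exists_ne_ne T.three_le_dim i₀ i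
      refine hd0 (T.eq_of_small_coord hd T.zero_mem k (fun l => ?_) ?_)
      · have := h l
        have := hz l
        simp only [Pi.zero_apply]
        grind
      · have := h k hki
        have := hz k hk₀
        simp only [Pi.zero_apply]
        grind

end IsBumpyCubeTiling

section LpBall

variable {n r : ℕ} {p : ℝ}

lemma lpBall_of_not_corner (hp : 1 < p)
    (h : ((n : ℝ) - 1) * ((r : ℝ) - 1) ^ p + ((r : ℝ) - 2) ^ p ≤ (r : ℝ) ^ p)
    {x : Fin n → ℤ} {j : Fin n} (hx : ∀ i, |x i| ≤ (r : ℤ) - 1) (hj : |x j| ≤ (r : ℤ) - 2) :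
    ∑ i, (|x i| : ℝ) ^ p ≤ (r : ℝ) ^ p := by
  have hp0 : 0 ≤ p := by linarith
  have hx' : ∀ i, (|x i| : ℝ) ≤ (r : ℝ) - 1 := fun i => by exact_mod_cast hx i
  have hj' : (|x j| : ℝ) ≤ (r : ℝ) - 2 := by exact_mod_cast hj
  rw [← Finset.add_sum_erase _ _ (mem_univ j)]
  have h1 : ∑ i ∈ univ.erase j, (|x i| : ℝ) ^ p ≤ ((n : ℝ) - 1) * ((r : ℝ) - 1) ^ p := by
    refine (Finset.sum_le_card_nsmul _ _ _ fun i _ =>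
      Real.rpow_le_rpow (abs_nonneg _) (hx' i) hp0).trans_eq ?_
    have : 1 ≤ n := Fin.pos j
    simp [Finset.card_erase_of_mem, Nat.cast_sub this]
  have h2 := Real.rpow_le_rpow (abs_nonneg _) hj' hp0
  linarith

lemma cube_or_bump_of_lpBall (hp : 1 < p) {x : Fin n → ℤ}
    (hx : ∑ i, (|x i| : ℝ) ^ p ≤ (r : ℝ) ^ p) :
    (∀ i, |x i| ≤ (r : ℤ) - 1) ∨ ∃ i, |x i| = r ∧ ∀ j, j ≠ i → x j = 0 := by
  have hp0 : 0 < p := by linarith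
  have hnn : ∀ i, 0 ≤ (|x i| : ℝ) ^ p := fun i => Real.rpow_nonneg (abs_nonneg _) p
  by_cases hall : ∀ i, |x i| ≤ (r : ℤ) - 1
  · exact Or.inl hall
  push Not at hall
  obtain ⟨i, hi⟩ := hall
  have hi' : (r : ℝ) ≤ |(x i : ℝ)| := by
    have : (r : ℤ) ≤ |x i| := by omega
    exact_mod_cast this
  have hpow := Real.rpow_le_rpow (Nat.cast_nonneg r) hi' hp0.le
  rw [← Finset.add_sum_erase _ _ (mem_univ i)] at hx
  have hrest : 0 ≤ ∑ k ∈ univ.erase i, (|x k| : ℝ) ^ p := sum_nonneg fun k _ => hnn k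
  refine Or.inr ⟨i, ?_, fun j hj => ?_⟩
  · have hle : (|x i| : ℝ) ≤ r :=
      (Real.rpow_le_rpow_iff (abs_nonneg _) (Nat.cast_nonneg r) hp0).1 (by linarith)
    have : (|x i| : ℝ) = r := le_antisymm hle hi'
    exact_mod_cast this
  · have hj0 : (|x j| : ℝ) ^ p = 0 := by
      have := Finset.single_le_sum (f := fun k => (|x k| : ℝ) ^ p) (fun k _ => hnn k)
        (mem_erase.2 ⟨hj, mem_univ j⟩)
      linarith [hnn j]
    have := (Real.rpow_eq_zero (abs_nonneg _) hp0.ne').1 hj0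
    simpa using this

lemma lpBall_bump (hp : 1 < p) {x : Fin n → ℤ} {i : Fin n} (hi : |x i| = r)
    (h : ∀ j, j ≠ i → x j = 0) : ∑ i, (|x i| : ℝ) ^ p ≤ (r : ℝ) ^ p := by
  have hi' : (|x i| : ℝ) = r := by exact_mod_cast hi
  rw [Finset.sum_eq_single i (fun j _ hj => by
    simp [h j hj, Real.zero_rpow (by linarith : p ≠ 0)]) (by simp), hi']

lemma lpBall_corner {x y : Fin n → ℤ} (hx : ∀ i, |x i| = (r : ℤ) - 1)
    (hy : ∀ i, |y i| = (r : ℤ) - 1) (h : ∑ i, (|x i| : ℝ) ^ p ≤ (r : ℝ) ^ p) :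
    ∑ i, (|y i| : ℝ) ^ p ≤ (r : ℝ) ^ p := by
  convert h using 3 with i
  exact_mod_cast (hy i).trans (hx i).symm

end LpBall

/-- For integers `n ≥ 3`, `r ≥ 3` and a real `1 < p < ∞` with
`(n−1)·(r−1)^p + (r−2)^p ≤ r^p`, there is no tiling of `ℤ^n` (equivalently of `ℝ^n` by
the polyomino `T_p^n(r)`) by translates of the `ℓ_p` ball `B_p^n(r)`. -/
theorem no_tiling_Zn (n r : ℕ) (hn : 3 ≤ n) (hr : 3 ≤ r) (p : ℝ) (hp : 1 < p)
    (h : ((n : ℝ) - 1) * ((r : ℝ) - 1) ^ p + ((r : ℝ) - 2) ^ p ≤ (r : ℝ) ^ p) :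
    ¬ ∃ C : Set (Fin n → ℤ), ∀ z : Fin n → ℤ, ∃! c, c ∈ C ∧
        ∑ i, (|z i - c i| : ℝ) ^ p ≤ (r : ℝ) ^ p := by
  rintro ⟨C, hC⟩
  obtain ⟨c₀, ⟨hc₀, -⟩, -⟩ := hC 0
  refine IsBumpyCubeTiling.not_isBumpyCubeTiling (n := n) (r := r)
    (B := {x | ∑ i, (|x i| : ℝ) ^ p ≤ (r : ℝ) ^ p}) (C := {c | c + c₀ ∈ C}) ⟨hn, by omega,
      fun x j hx hj => lpBall_of_not_corner hp h hx hj,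
      fun x i hi hx => lpBall_bump hp hi hx, fun x hx => cube_or_bump_of_lpBall hp hx,
      fun x hx hxc y hy => lpBall_corner hxc hy hx, by simpa using hc₀, fun z => ?_, ?_⟩
  · obtain ⟨c, ⟨hc, hzc⟩, -⟩ := hC (z + c₀)
    refine ⟨c - c₀, by simpa using hc, ?_⟩
    simp only [Set.mem_ofPred_eq, Pi.sub_apply, Pi.add_apply] at hzc ⊢
    convert hzc using 4
    push_cast
    ring
  · intro z c hc c' hc' hz hz'
    refine add_right_cancel ((hC (z + c₀)).unique ⟨hc, ?_⟩ ⟨hc', ?_⟩)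
    · simpa using hz
    · simpa using hz'
end

section
/- Let m be an odd prime and a an integer not divisible by m. Let C be the cyclic subgroup of (ℤ/m²ℤ)² generated by (1̄, m·a‾). Then |C| = m² and C is a perfect code in the ℓ_∞ metric on (ℤ/m²ℤ)² with radius (m−1)/2: every element of (ℤ/m²ℤ)² lies within ∞-Lee distance (m−1)/2 of exactly one codeword of C. -/
/-- The Lee distance on `ℤ/qℤ`. -/
def dLee {q : ℕ} (x y : ZMod q) : ℕ := min (x - y).val (y - x).val

/-- Two residues are within Lee distance `r` iff they differ by an integer of absolute value
at most `r`. -/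
theorem dLee_le_iff {q : ℕ} [NeZero q] (x y : ZMod q) (r : ℕ) :
    dLee x y ≤ r ↔ ∃ e : ℤ, |e| ≤ r ∧ x - y = e := by
  unfold dLee
  rw [min_le_iff]
  constructor
  · rintro (h | h)
    · exact ⟨(x - y).val, by rw [Nat.abs_cast]; exact_mod_cast h, by simp⟩
    · exact ⟨-(y - x).val, by rw [abs_neg, Nat.abs_cast]; exact_mod_cast h, by simp⟩
  · rintro ⟨e, he, hxy⟩
    have val_le (n : ℕ) : ((n : ZMod q)).val ≤ n := by
      rw [ZMod.val_natCast]
      exact Nat.mod_le _ _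
    rcases Int.eq_nat_or_neg e with ⟨n, rfl | rfl⟩
    · have hn : n ≤ r := by simpa using he
      left
      rw [hxy, Int.cast_natCast]
      exact (val_le n).trans hn
    · have hn : n ≤ r := by simpa using he
      right
      rw [← neg_sub x y, hxy, Int.cast_neg, neg_neg, Int.cast_natCast]
      exact (val_le n).trans hn

/-- Every integer is congruent modulo `2 * r + 1` to one of absolute value at most `r`. -/
theorem exists_abs_le_dvd_sub (r : ℕ) (x : ℤ) :
    ∃ e : ℤ, |e| ≤ r ∧ (2 * r + 1 : ℤ) ∣ x - e := by
  refine ⟨(x + r) % (2 * r + 1) - r, ?_, ?_⟩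
  · have h₀ := Int.emod_nonneg (x + r) (b := 2 * r + 1) (by omega)
    have h₁ := Int.emod_lt_of_pos (x + r) (b := 2 * r + 1) (by omega)
    rw [abs_le]
    omega
  · have h := Int.dvd_self_sub_emod (x := x + r) (m := 2 * r + 1)
    rwa [show x - ((x + r) % (2 * r + 1) - r) = x + r - (x + r) % (2 * r + 1) by ring]

/-- Integers of absolute value at most `r` are determined by their residue modulo `2 * r + 1`. -/
theorem eq_of_abs_le_of_dvd_sub {r : ℕ} {e f : ℤ} (he : |e| ≤ r) (hf : |f| ≤ r)
    (h : (2 * r + 1 : ℤ) ∣ e - f) : e = f := by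
  rw [abs_le] at he hf
  refine sub_eq_zero.mp (Int.eq_zero_of_abs_lt_dvd h ?_)
  rw [abs_lt]
  omega

/-- For an odd prime `m` and an integer `a` not divisible by `m`, the cyclic subgroup `C`
of `(ℤ/m²ℤ)²` generated by `(1, m·a)` has `m²` elements and is a perfect code with radius
`(m−1)/2` in the `ℓ_∞` (∞-Lee) metric. -/
theorem cyclic_perfect_code (m : ℕ) (hm : Nat.Prime m) (hodd : Odd m)
    (a : ℤ) (ha : ¬ ((m : ℤ) ∣ a)) :
    Nat.card (AddSubgroup.zmultiples
        ((1, (m : ZMod (m ^ 2)) * (a : ZMod (m ^ 2))) :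
          ZMod (m ^ 2) × ZMod (m ^ 2))) = m ^ 2 ∧
    ∀ z : ZMod (m ^ 2) × ZMod (m ^ 2), ∃! c : ZMod (m ^ 2) × ZMod (m ^ 2),
      c ∈ AddSubgroup.zmultiples
          ((1, (m : ZMod (m ^ 2)) * (a : ZMod (m ^ 2))) :
            ZMod (m ^ 2) × ZMod (m ^ 2)) ∧
      max (dLee z.1 c.1) (dLee z.2 c.2) ≤ (m - 1) / 2 := by
  have : NeZero (m ^ 2) := ⟨pow_ne_zero 2 hm.ne_zero⟩
  have hp : Prime (m : ℤ) := Nat.prime_iff_prime_int.mp hm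
  have hcast (u v : ℤ) : (u : ZMod (m ^ 2)) = v ↔ (m : ℤ) * m ∣ u - v := by
    rw [eq_comm, ZMod.intCast_eq_intCast_iff_dvd_sub, Nat.cast_pow, sq]
  obtain ⟨r, hr⟩ := hodd
  have hrad : (m - 1) / 2 = r := by omega
  have hmr : (m : ℤ) = 2 * r + 1 := by exact_mod_cast hr
  refine ⟨?_, ?_⟩
  · rw [Nat.card_zmultiples, Prod.addOrderOf, ZMod.addOrderOf_one]
    refine Nat.lcm_eq_left ?_
    simpa using addOrderOf_dvd_natCard ((m : ZMod (m ^ 2)) * (a : ZMod (m ^ 2)))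
  rintro ⟨x, y⟩
  obtain ⟨X, rfl⟩ := ZMod.intCast_surjective x
  obtain ⟨Y, rfl⟩ := ZMod.intCast_surjective y
  have hball (k : ℤ) : max (dLee (X : ZMod (m ^ 2)) (k • (1, (m : ZMod (m ^ 2)) * a)).1)
      (dLee (Y : ZMod (m ^ 2)) (k • ((1 : ZMod (m ^ 2)), (m : ZMod (m ^ 2)) * a)).2)
        ≤ (m - 1) / 2 ↔
      ∃ e f : ℤ, |e| ≤ r ∧ |f| ≤ r ∧ (m : ℤ) * m ∣ X - k - e ∧
        (m : ℤ) * m ∣ Y - k * (m * a) - f := by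
    rw [hrad, max_le_iff, dLee_le_iff, dLee_le_iff]
    simp only [← hcast, Prod.smul_mk, zsmul_eq_mul, mul_one]
    push_cast
    constructor
    · rintro ⟨⟨e, he, h⟩, f, hf, h'⟩
      exact ⟨e, f, he, hf, h, h'⟩
    · rintro ⟨e, f, he, hf, h, h'⟩
      exact ⟨⟨e, he, h⟩, f, hf, h'⟩
  apply existsUnique_of_exists_of_unique
  · obtain ⟨f, hf, t, ht⟩ := exists_abs_le_dvd_sub r Y
    obtain ⟨b, c, hbc⟩ := (hp.coprime_iff_not_dvd.mpr ha)
    obtain ⟨e, he, s, hs⟩ := exists_abs_le_dvd_sub r (X - c * t)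
    rw [← hmr] at ht hs
    refine ⟨_, ⟨X - e, rfl⟩, (hball _).mpr ⟨e, f, he, hf, by simp, b * t - s * a, ?_⟩⟩
    linear_combination ht - m * a * hs - m * t * hbc
  · rintro _ _ ⟨⟨k, rfl⟩, hk⟩ ⟨⟨l, rfl⟩, hl⟩
    obtain ⟨e, f, he, hf, ⟨u, hu⟩, v, hv⟩ := (hball k).mp hk
    obtain ⟨e', f', he', hf', ⟨u', hu'⟩, v', hv'⟩ := (hball l).mp hl
    have hff : f = f' := eq_of_abs_le_of_dvd_sub hf hf' <| by
      rw [← hmr]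
      exact ⟨m * (v' - v) + (l - k) * a, by linear_combination hv' - hv⟩
    have hkl : (m : ℤ) ∣ k - l := by
      have hmul : (m : ℤ) ∣ (k - l) * a := ⟨v' - v, by
        apply mul_left_cancel₀ hp.ne_zero
        linear_combination hv' - hv - hff⟩
      exact (hp.dvd_or_dvd hmul).resolve_right ha
    have hee : e = e' := eq_of_abs_le_of_dvd_sub he he' <| by
      rw [← hmr]
      obtain ⟨w, hw⟩ := hkl
      exact ⟨m * (u' - u) - w, by linear_combination hu' - hu - hw⟩
    have hcong : (k : ZMod (m ^ 2)) = l :=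
      (hcast k l).mpr ⟨u' - u, by linear_combination hu' - hu - hee⟩
    simp [hcong]
end
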